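/- arXiv:1801.00582 — 2 statements merged into one kernel-verified Lean document; each statement's English description precedes it below -/
import Mathlib

section
/- (Connes–Moscovici deformation) Let R be a commutative C-algebra, let V and W be derivations of R with W∘V − V∘W = 2V. For n ≥ 0 define χ_n(f,g) = Σ_{r=0}^n ((−1)^r / (r!(n−r)!)) · (V^r ∘ (W+r·Id)^{<n−r>})(f) · (V^{n−r} ∘ (W+(n−r)·Id)^{<r>})(g), where for a derivation F the Pochhammer iterate is F^{<0>} = Id and F^{<m>} = F^{<m−1>} ∘ (F + (m−1)Id). Then (χ_n)_{n≥0} is a formal deformation of R (χ_0 is the product and the associated star product on R[[ħ]] is associative). -/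
/-!
Polynomials in two variables `a` and `b` serve as symbols of the operators built from `V` and `W`:
the jet of `f` is the linear map `J_f : aʳ bˢ ↦ (-1)ˢ Vʳ (W + r)^{<s>} f`. On jets, `V` and `W`
become the first order operators `a + a ∂_b` and `-b + a ∂_a - b ∂_b`, and a linear map intertwining
these with `V` and `W` is determined by its value at `1`. In terms of the pairing
`⟨f ⊗ g, p ⊗ q⟩ = J_f(p) J_g(q)`, the bracket is `χ_n(f, g) = ⟨f ⊗ g, Pⁿ / n!⟩` with
`P = a ⊗ b - b ⊗ a`. Both operators are compatible with the coproduct `Δ` making `a` and `b`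
primitive, and their derivation parts kill `P`, so uniqueness shows that the jet of `χ_n(f, g)` is
`p ↦ ⟨f ⊗ g, Δ(p) Pⁿ / n!⟩`. The two iterated products of `f`, `g`, `h` thus pair `f ⊗ g ⊗ h` with
the `n`-th divided powers of the two sides of the cocycle identity
`P ⊗ 1 + (Δ ⊗ 1) P = 1 ⊗ P + (1 ⊗ Δ) P`.
-/

open Finset

/-- The Pochhammer iterate `F^{<m>}` of a linear map: `F^{<0>} = Id`,
`F^{<m>} = F^{<m−1>} ∘ (F + (m−1)·Id)`. -/
noncomputable def pochIter {A : Type*} [CommRing A] [Algebra ℂ A]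
    (F : A →ₗ[ℂ] A) : ℕ → A →ₗ[ℂ] A
  | 0 => LinearMap.id
  | (m + 1) => (pochIter F m) ∘ₗ (F + (m : ℂ) • LinearMap.id)

namespace ConnesMoscovici

open MvPolynomial
open scoped TensorProduct

section DividedPow

variable (K : Type*) [Field K]

/-- The divided power `xⁿ / n!`, that is, the coefficient of `ħⁿ` in `exp (ħx)`. -/
noncomputable def dividedPow {A : Type*} [Semiring A] [Algebra K A] (n : ℕ) (x : A) : A :=
  (n.factorial : K)⁻¹ • x ^ n

variable {K}

lemma map_dividedPow {A B : Type*} [Semiring A] [Algebra K A] [Semiring B] [Algebra K B]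
    (φ : A →ₐ[K] B) (n : ℕ) (x : A) : φ (dividedPow K n x) = dividedPow K n (φ x) := by
  simp only [dividedPow, map_smul, map_pow]

lemma dividedPow_add [CharZero K] {A : Type*} [Semiring A] [Algebra K A] {x y : A}
    (hxy : Commute x y) (n : ℕ) :
    dividedPow K n (x + y) = ∑ r ∈ range (n + 1), dividedPow K r x * dividedPow K (n - r) y := by
  simp only [dividedPow, hxy.add_pow, smul_sum]
  refine sum_congr rfl fun r hr => ?_
  have hn : (n.factorial : K) ≠ 0 := Nat.cast_ne_zero.mpr n.factorial_ne_zero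
  rw [← (Nat.cast_commute _ _).eq, ← nsmul_eq_mul, ← Nat.cast_smul_eq_nsmul K, smul_smul,
    smul_mul_smul_comm, Nat.cast_choose K (mem_range_succ_iff.mp hr)]
  congr 1
  field_simp

lemma derivation_dividedPow_eq_zero {A : Type*} [CommRing A] [Algebra K A]
    (D : Derivation K A A) {x : A} (hx : D x = 0) (n : ℕ) : D (dividedPow K n x) = 0 := by
  simp [dividedPow, Derivation.leibniz_pow, hx]

end DividedPow

section TensorSquare

variable {k : Type*} [CommRing k]

/-- The operator `L ⊗ 1 + 1 ⊗ L` on the tensor square, which extends `L` by the Leibniz rule. -/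
noncomputable def leibnizMap {M : Type*} [AddCommGroup M] [Module k M] (L : M →ₗ[k] M) :
    M ⊗[k] M →ₗ[k] M ⊗[k] M :=
  L.rTensor M + L.lTensor M

@[simp]
lemma leibnizMap_tmul {M : Type*} [AddCommGroup M] [Module k M] (L : M →ₗ[k] M) (p q : M) :
    leibnizMap L (p ⊗ₜ q) = L p ⊗ₜ q + p ⊗ₜ L q := by
  simp [leibnizMap]

variable {A : Type*} [CommRing A] [Algebra k A]

lemma leibnizMap_mul (d : Derivation k A A) (x y : A ⊗[k] A) :
    leibnizMap d.toLinearMap (x * y) =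
      x • leibnizMap d.toLinearMap y + y • leibnizMap d.toLinearMap x := by
  simp only [smul_eq_mul]
  induction x with
  | zero => simp
  | add x₁ x₂ h₁ h₂ => simp only [add_mul, mul_add, map_add, h₁, h₂]; ring
  | tmul p q =>
    induction y with
    | zero => simp
    | add y₁ y₂ h₁ h₂ => simp only [add_mul, mul_add, map_add, h₁, h₂]; ring
    | tmul p' q' =>
      simp only [Algebra.TensorProduct.tmul_mul_tmul, leibnizMap_tmul, Derivation.coeFn_coe,
        Derivation.leibniz, smul_eq_mul, TensorProduct.add_tmul, TensorProduct.tmul_add, mul_add,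
        mul_comm p' p, mul_comm q' q]
      abel

/-- The derivation `d ⊗ 1 + 1 ⊗ d` of `A ⊗ A` induced by a derivation `d` of `A`. -/
noncomputable def tensorDerivation (d : Derivation k A A) : Derivation k (A ⊗[k] A) (A ⊗[k] A) :=
  Derivation.mk' (leibnizMap d.toLinearMap) (leibnizMap_mul d)

@[simp]
lemma tensorDerivation_tmul (d : Derivation k A A) (p q : A) :
    tensorDerivation d (p ⊗ₜ q) = d p ⊗ₜ q + p ⊗ₜ d q :=
  leibnizMap_tmul d.toLinearMap p q

/-- The first order differential operator `u + d`, with `u` acting by multiplication. -/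
noncomputable def firstOrderOp (u : A) (d : Derivation k A A) : A →ₗ[k] A :=
  LinearMap.mulLeft k u + d.toLinearMap

@[simp]
lemma firstOrderOp_apply (u : A) (d : Derivation k A A) (p : A) :
    firstOrderOp u d p = u * p + d p :=
  rfl

lemma leibnizMap_firstOrderOp (u : A) (d : Derivation k A A) (x : A ⊗[k] A) :
    leibnizMap (firstOrderOp u d) x = (u ⊗ₜ 1 + 1 ⊗ₜ u) * x + tensorDerivation d x := by
  induction x with
  | zero => simp
  | add x₁ x₂ h₁ h₂ => simp only [mul_add, map_add, h₁, h₂]; abel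
  | tmul p q =>
    simp only [leibnizMap_tmul, firstOrderOp_apply, tensorDerivation_tmul, add_mul,
      Algebra.TensorProduct.tmul_mul_tmul, one_mul, TensorProduct.add_tmul, TensorProduct.tmul_add]
    abel

lemma leibnizMap_firstOrderOp_mul {Δ : A →ₐ[k] A ⊗[k] A} {u : A} {d : Derivation k A A}
    {Q : A ⊗[k] A} (hu : Δ u = u ⊗ₜ 1 + 1 ⊗ₜ u) (hd : ∀ p, tensorDerivation d (Δ p) = Δ (d p))
    (hQ : tensorDerivation d Q = 0) (p : A) :
    leibnizMap (firstOrderOp u d) (Δ p * Q) = Δ (firstOrderOp u d p) * Q := by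
  rw [leibnizMap_firstOrderOp, Derivation.leibniz, hQ, hd, firstOrderOp_apply, map_add, map_mul, hu]
  simp only [smul_eq_mul]
  ring

end TensorSquare

section MulMap

variable {k R : Type*} [CommRing k] [CommRing R] [Algebra k R]

section

variable {M N : Type*} [AddCommGroup M] [Module k M] [AddCommGroup N] [Module k N]

/-- The pairing `p ⊗ q ↦ S p * T q` of two linear maps with values in an algebra. -/
noncomputable def mulMap (S : M →ₗ[k] R) (T : N →ₗ[k] R) : M ⊗[k] N →ₗ[k] R :=
  LinearMap.mul' k R ∘ₗ TensorProduct.map S T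

@[simp]
lemma mulMap_tmul (S : M →ₗ[k] R) (T : N →ₗ[k] R) (p : M) (q : N) :
    mulMap S T (p ⊗ₜ q) = S p * T q := by
  simp [mulMap]

lemma derivation_mulMap (D : Derivation k R R) {L : M →ₗ[k] M} {S T : M →ₗ[k] R}
    (hS : D.toLinearMap ∘ₗ S = S ∘ₗ L) (hT : D.toLinearMap ∘ₗ T = T ∘ₗ L) :
    D.toLinearMap ∘ₗ mulMap S T = mulMap S T ∘ₗ leibnizMap L := by
  have hS' (p : M) : D (S p) = S (L p) := LinearMap.congr_fun hS p
  have hT' (p : M) : D (T p) = T (L p) := LinearMap.congr_fun hT p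
  refine TensorProduct.ext' fun p q => ?_
  simp only [LinearMap.comp_apply, Derivation.coeFn_coe, mulMap_tmul, leibnizMap_tmul, map_add,
    Derivation.leibniz, hS', hT', smul_eq_mul]
  ring

end

variable {A : Type*} [CommRing A] [Algebra k A]

lemma mulMap_mulMap (F G H : A →ₗ[k] R) (z : (A ⊗[k] A) ⊗[k] A) :
    mulMap (mulMap F G) H z =
      mulMap F (mulMap G H) (Algebra.TensorProduct.assoc k k k A A A z) := by
  suffices mulMap (mulMap F G) H = mulMap F (mulMap G H) ∘ₗ
      (Algebra.TensorProduct.assoc k k k A A A).toLinearMap from LinearMap.congr_fun this z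
  refine TensorProduct.ext_threefold fun p q r => ?_
  simp [mul_assoc]

lemma mulMap_twisted_left {Δ : A →ₐ[k] A ⊗[k] A} {Q : A ⊗[k] A} {F G FG : A →ₗ[k] R}
    (hFG : ∀ p, FG p = mulMap F G (Δ p * Q)) (H : A →ₗ[k] R) (z : A ⊗[k] A) :
    mulMap FG H z = mulMap (mulMap F G) H
      (Algebra.TensorProduct.map Δ (AlgHom.id k A) z * (Q ⊗ₜ 1)) := by
  induction z with
  | zero => simp
  | add z₁ z₂ h₁ h₂ => simp only [map_add, add_mul, h₁, h₂]
  | tmul p q => simp [hFG]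

lemma mulMap_twisted_right {Δ : A →ₐ[k] A ⊗[k] A} {Q : A ⊗[k] A} {G H GH : A →ₗ[k] R}
    (hGH : ∀ p, GH p = mulMap G H (Δ p * Q)) (F : A →ₗ[k] R) (z : A ⊗[k] A) :
    mulMap F GH z = mulMap F (mulMap G H)
      (Algebra.TensorProduct.map (AlgHom.id k A) Δ z * (1 ⊗ₜ Q)) := by
  induction z with
  | zero => simp
  | add z₁ z₂ h₁ h₂ => simp only [map_add, add_mul, h₁, h₂]
  | tmul p q => simp [hGH]

end MulMap

section TwistedAssociativity

variable {K A R : Type*} [Field K] [CharZero K] [CommRing A] [Algebra K A] [CommRing R]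
  [Algebra K R]

lemma sum_mulMap_twisted_assoc {Δ : A →ₐ[K] A ⊗[K] A} {P : A ⊗[K] A}
    (hP : Algebra.TensorProduct.assoc K K K A A A
        (P ⊗ₜ 1 + Algebra.TensorProduct.map Δ (AlgHom.id K A) P) =
      1 ⊗ₜ P + Algebra.TensorProduct.map (AlgHom.id K A) Δ P)
    {F G H : A →ₗ[K] R} {FG GH : ℕ → A →ₗ[K] R}
    (hFG : ∀ n p, FG n p = mulMap F G (Δ p * dividedPow K n P))
    (hGH : ∀ n p, GH n p = mulMap G H (Δ p * dividedPow K n P)) (n : ℕ) :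
    ∑ r ∈ range (n + 1), mulMap (FG r) H (dividedPow K (n - r) P) =
      ∑ r ∈ range (n + 1), mulMap F (GH r) (dividedPow K (n - r) P) := by
  set Δl := Algebra.TensorProduct.map Δ (AlgHom.id K A)
  set Δr := Algebra.TensorProduct.map (AlgHom.id K A) Δ
  have dividedPow_tmul_one (r : ℕ) :
      dividedPow K r P ⊗ₜ[K] (1 : A) = dividedPow K r (P ⊗ₜ[K] (1 : A)) :=
    map_dividedPow (Algebra.TensorProduct.includeLeft (S := K) (B := A)) r P
  have one_tmul_dividedPow (r : ℕ) :
      (1 : A) ⊗ₜ[K] dividedPow K r P = dividedPow K r ((1 : A) ⊗ₜ[K] P) :=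
    map_dividedPow (Algebra.TensorProduct.includeRight (A := A)) r P
  have commute_left : Commute (P ⊗ₜ[K] (1 : A)) (Δl P) := Commute.all _ _
  have commute_right : Commute ((1 : A) ⊗ₜ[K] P) (Δr P) := Commute.all _ _
  calc ∑ r ∈ range (n + 1), mulMap (FG r) H (dividedPow K (n - r) P)
    _ = mulMap (mulMap F G) H (dividedPow K n (P ⊗ₜ 1 + Δl P)) := by
      rw [dividedPow_add commute_left, map_sum]
      refine sum_congr rfl fun r _ => ?_
      rw [mulMap_twisted_left (hFG r), map_dividedPow, dividedPow_tmul_one, mul_comm]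
    _ = mulMap F (mulMap G H) (dividedPow K n (1 ⊗ₜ P + Δr P)) := by
      rw [mulMap_mulMap, ← hP]
      exact congrArg _ (map_dividedPow
        (Algebra.TensorProduct.assoc K K K A A A).toAlgHom n (P ⊗ₜ 1 + Δl P))
    _ = ∑ r ∈ range (n + 1), mulMap F (GH r) (dividedPow K (n - r) P) := by
      rw [dividedPow_add commute_right, map_sum]
      refine sum_congr rfl fun r _ => ?_
      rw [mulMap_twisted_right (hGH r), map_dividedPow, one_tmul_dividedPow, mul_comm]

end TwistedAssociativity

section PoissonTensor

variable {k A : Type*} [CommRing k] [CommRing A] [Algebra k A]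

variable (k) in
/-- The Poisson tensor `x ⊗ y - y ⊗ x`, the exponent of the Moyal twist. -/
noncomputable def poissonTensor (x y : A) : A ⊗[k] A :=
  x ⊗ₜ y - y ⊗ₜ x

lemma poissonTensor_cocycle {Δ : A →ₐ[k] A ⊗[k] A} {x y : A} (hx : Δ x = x ⊗ₜ 1 + 1 ⊗ₜ x)
    (hy : Δ y = y ⊗ₜ 1 + 1 ⊗ₜ y) :
    Algebra.TensorProduct.assoc k k k A A A
        (poissonTensor k x y ⊗ₜ 1 +
          Algebra.TensorProduct.map Δ (AlgHom.id k A) (poissonTensor k x y)) =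
      1 ⊗ₜ poissonTensor k x y +
        Algebra.TensorProduct.map (AlgHom.id k A) Δ (poissonTensor k x y) := by
  simp only [poissonTensor, map_add, map_sub, Algebra.TensorProduct.map_tmul, hx, hy,
    AlgHom.id_apply, TensorProduct.add_tmul, TensorProduct.tmul_add, TensorProduct.sub_tmul,
    TensorProduct.tmul_sub, Algebra.TensorProduct.assoc_tmul]
  abel

end PoissonTensor

section Symbol

variable (k : Type*) [CommRing k]

/-- The algebra of symbols `k[a, b]`, with `a = X 0` encoding `V` and `b = X 1` encoding `-W`. -/
abbrev Symbol := MvPolynomial (Fin 2) k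

/-- The coproduct of a polynomial algebra for which all variables are primitive. -/
noncomputable def primitiveCoproduct (σ : Type*) :
    MvPolynomial σ k →ₐ[k] MvPolynomial σ k ⊗[k] MvPolynomial σ k :=
  aeval fun i => X i ⊗ₜ 1 + 1 ⊗ₜ X i

variable {k}

@[simp]
lemma primitiveCoproduct_X {σ : Type*} (i : σ) :
    primitiveCoproduct k σ (X i) = X i ⊗ₜ 1 + 1 ⊗ₜ X i :=
  aeval_X _ i

lemma derivation_algHom_of_X {σ B : Type*} [CommRing B] [Algebra k B]
    (φ : MvPolynomial σ k →ₐ[k] B) {d : Derivation k (MvPolynomial σ k) (MvPolynomial σ k)}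
    {D : Derivation k B B} (h : ∀ i, D (φ (X i)) = φ (d (X i))) (p : MvPolynomial σ k) :
    D (φ p) = φ (d p) := by
  induction p using MvPolynomial.induction_on with
  | C c =>
    rw [← algebraMap_eq, AlgHom.commutes, Derivation.map_algebraMap, Derivation.map_algebraMap,
      map_zero]
  | add p q hp hq => simp only [map_add, hp, hq]
  | mul_X p i hp => simp only [map_mul, map_add, Derivation.leibniz, smul_eq_mul, hp, h]

variable (k) in
/-- The derivation `a ∂_b`. -/
noncomputable def derivationV : Derivation k (Symbol k) (Symbol k) :=
  mkDerivation k ![0, X 0]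

variable (k) in
/-- The derivation `a ∂_a - b ∂_b`. -/
noncomputable def derivationW : Derivation k (Symbol k) (Symbol k) :=
  mkDerivation k ![X 0, -X 1]

variable (k) in
/-- The operator `a + a ∂_b`, through which `V` acts on jets. -/
noncomputable def symbolV : Symbol k →ₗ[k] Symbol k :=
  firstOrderOp (X 0) (derivationV k)

variable (k) in
/-- The operator `-b + a ∂_a - b ∂_b`, through which `W` acts on jets. -/
noncomputable def symbolW : Symbol k →ₗ[k] Symbol k :=
  firstOrderOp (-X 1) (derivationW k)

@[simp]
lemma derivationV_X_zero : derivationV k (X 0) = 0 := by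
  simp [derivationV, mkDerivation_X]

@[simp]
lemma derivationV_X_one : derivationV k (X 1) = X 0 := by
  simp [derivationV, mkDerivation_X]

@[simp]
lemma derivationW_X_zero : derivationW k (X 0) = X 0 := by
  simp [derivationW, mkDerivation_X]

@[simp]
lemma derivationW_X_one : derivationW k (X 1) = -X 1 := by
  simp [derivationW, mkDerivation_X]

lemma leibnizMap_symbolV {Q : Symbol k ⊗[k] Symbol k}
    (hQ : tensorDerivation (derivationV k) Q = 0) (p : Symbol k) :
    leibnizMap (symbolV k) (primitiveCoproduct k _ p * Q) =
      primitiveCoproduct k _ (symbolV k p) * Q := by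
  refine leibnizMap_firstOrderOp_mul (primitiveCoproduct_X 0)
    (derivation_algHom_of_X _ fun i => ?_) hQ p
  fin_cases i <;> simp

lemma leibnizMap_symbolW {Q : Symbol k ⊗[k] Symbol k}
    (hQ : tensorDerivation (derivationW k) Q = 0) (p : Symbol k) :
    leibnizMap (symbolW k) (primitiveCoproduct k _ p * Q) =
      primitiveCoproduct k _ (symbolW k p) * Q := by
  refine leibnizMap_firstOrderOp_mul ?_ (derivation_algHom_of_X _ fun i => ?_) hQ p
  · simp only [map_neg, primitiveCoproduct_X, TensorProduct.neg_tmul, TensorProduct.tmul_neg,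
      neg_add]
  · fin_cases i <;> simp [TensorProduct.neg_tmul, TensorProduct.tmul_neg, add_comm]

lemma tensorDerivation_derivationV_poissonTensor :
    tensorDerivation (derivationV k) (poissonTensor k (X 0) (X 1)) = 0 := by
  simp [poissonTensor]

lemma tensorDerivation_derivationW_poissonTensor :
    tensorDerivation (derivationW k) (poissonTensor k (X 0) (X 1)) = 0 := by
  simp [poissonTensor, TensorProduct.neg_tmul, TensorProduct.tmul_neg]

variable (k) in
/-- The symbol `aʳ bˢ`. -/
noncomputable def symbolMonomial (r s : ℕ) : Symbol k :=
  X 0 ^ r * X 1 ^ s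

lemma symbolMonomial_eq_basisMonomials (r s : ℕ) :
    symbolMonomial k r s =
      basisMonomials (Fin 2) k (Finsupp.single 0 r + Finsupp.single 1 s) := by
  rw [coe_basisMonomials, symbolMonomial, X_pow_eq_monomial, X_pow_eq_monomial, monomial_mul,
    one_mul]

lemma symbol_hom_ext {M : Type*} [AddCommGroup M] [Module k M] {S T : Symbol k →ₗ[k] M}
    (h : ∀ r s, S (symbolMonomial k r s) = T (symbolMonomial k r s)) : S = T := by
  refine (basisMonomials (Fin 2) k).ext fun m => ?_
  have hm : m = Finsupp.single 0 (m 0) + Finsupp.single 1 (m 1) := by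
    ext i; fin_cases i <;> simp
  rw [hm, ← symbolMonomial_eq_basisMonomials]
  exact h _ _

lemma symbolV_symbolMonomial (r s : ℕ) :
    symbolV k (symbolMonomial k r s) =
      symbolMonomial k (r + 1) s + (s : k) • symbolMonomial k (r + 1) (s - 1) := by
  simp only [symbolV, symbolMonomial, firstOrderOp_apply, Derivation.leibniz,
    Derivation.leibniz_pow, derivationV_X_zero, derivationV_X_one, smul_eq_mul, nsmul_eq_mul,
    smul_eq_C_mul, map_natCast]
  ring

lemma symbolW_symbolMonomial (r s : ℕ) :
    symbolW k (symbolMonomial k r s) =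
      -symbolMonomial k r (s + 1) + ((r : k) - s) • symbolMonomial k r s := by
  have hX (i : Fin 2) (m : ℕ) :
      (m : Symbol k) * (X i ^ (m - 1) * X i) = (m : Symbol k) * X i ^ m := by
    cases m <;> simp [pow_succ]
  simp only [symbolW, symbolMonomial, firstOrderOp_apply, Derivation.leibniz,
    Derivation.leibniz_pow, derivationW_X_zero, derivationW_X_one, smul_eq_mul, nsmul_eq_mul,
    smul_eq_C_mul, map_sub, map_natCast]
  linear_combination (X 1 ^ s) * hX 0 r - (X 0 ^ r) * hX 1 s

lemma dividedPow_poissonTensor {K : Type*} [Field K] [CharZero K] (n : ℕ) :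
    dividedPow K n (poissonTensor K (X 0 : Symbol K) (X 1)) = ∑ r ∈ range (n + 1),
      ((-1 : K) ^ (n - r) / ((r.factorial : K) * ((n - r).factorial : K))) •
        (symbolMonomial K r (n - r) ⊗ₜ symbolMonomial K (n - r) r) := by
  rw [poissonTensor, sub_eq_add_neg, dividedPow_add (Commute.all _ _)]
  refine sum_congr rfl fun r _ => ?_
  have hneg : -((X 1 : Symbol K) ⊗ₜ[K] (X 0 : Symbol K)) = (-1 : K) • (X 1 ⊗ₜ X 0) :=
    (neg_one_smul K _).symm
  rw [dividedPow, dividedPow, hneg, smul_pow, smul_smul, smul_mul_smul_comm,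
    Algebra.TensorProduct.tmul_pow, Algebra.TensorProduct.tmul_pow,
    Algebra.TensorProduct.tmul_mul_tmul, symbolMonomial, symbolMonomial, mul_comm (X 1 ^ r)]
  congr 1
  field_simp

end Symbol

section IsJet

variable {k M : Type*} [CommRing k] [AddCommGroup M] [Module k M]

/-- A linear map on symbols is a jet for the operators `v` and `w` if it intertwines them with
`symbolV` and `symbolW`. -/
structure IsJet (v w : Module.End k M) (T : Symbol k →ₗ[k] M) : Prop where
  comp_symbolV : v ∘ₗ T = T ∘ₗ symbolV k
  comp_symbolW : w ∘ₗ T = T ∘ₗ symbolW k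

lemma IsJet.ext {v w : Module.End k M} {S T : Symbol k →ₗ[k] M} (hS : IsJet v w S)
    (hT : IsJet v w T) (h : S 1 = T 1) : S = T := by
  have of_V (p : Symbol k) (hp : S p = T p) : S (symbolV k p) = T (symbolV k p) := by
    rw [← LinearMap.comp_apply, ← LinearMap.comp_apply, ← hS.comp_symbolV, ← hT.comp_symbolV,
      LinearMap.comp_apply, LinearMap.comp_apply, hp]
  have of_W (p : Symbol k) (hp : S p = T p) : S (symbolW k p) = T (symbolW k p) := by
    rw [← LinearMap.comp_apply, ← LinearMap.comp_apply, ← hS.comp_symbolW, ← hT.comp_symbolW,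
      LinearMap.comp_apply, LinearMap.comp_apply, hp]
  refine symbol_hom_ext fun r => ?_
  induction r with
  | zero =>
    intro s
    induction s with
    | zero => simpa [symbolMonomial] using h
    | succ s ih =>
      have := of_W _ ih
      simpa only [symbolW_symbolMonomial, map_add, map_neg, map_smul, ih, add_left_inj, neg_inj]
        using this
  | succ r ihr =>
    intro s
    induction s with
    | zero => simpa [symbolV_symbolMonomial] using of_V _ (ihr 0)
    | succ s ih =>
      have := of_V _ (ihr (s + 1))
      simpa only [symbolV_symbolMonomial, map_add, map_smul, Nat.add_sub_cancel, ih, add_left_inj]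
        using this

end IsJet

lemma semiconjBy_pow_left {E : Type*} [Ring E] {v w c : E} (h : SemiconjBy v (w + c) w)
    (hc : Commute v c) (r : ℕ) : SemiconjBy (v ^ r) (w + r • c) w := by
  induction r with
  | zero => simp
  | succ r ih =>
    have hv : SemiconjBy v (w + c + r • c) (w + r • c) := h.add_right (hc.smul_right r)
    rw [pow_succ, succ_nsmul', ← add_assoc]
    exact ih.mul_left hv

lemma semiconjBy_of_commutator_eq {k M : Type*} [CommRing k] [AddCommGroup M] [Module k M]
    {v w : Module.End k M} (h : ∀ f, w (v f) - v (w f) = (2 : k) • v f) :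
    SemiconjBy v (w + 2) w := by
  refine LinearMap.ext fun f => ?_
  have hf : w (v f) = v (w f) + (2 : k) • v f := sub_eq_iff_eq_add'.mp (h f)
  simp [hf, two_smul]

section Jet

variable {R : Type*} [CommRing R] [Algebra ℂ R]

lemma pochIter_eq_aeval_ascPochhammer (F : Module.End ℂ R) (n : ℕ) :
    pochIter F n = Polynomial.aeval F (ascPochhammer ℂ n) := by
  induction n with
  | zero => simp [pochIter, Module.End.one_eq_id]
  | succ n ih =>
    rw [ascPochhammer_succ_right, map_mul, ← ih]
    simp [pochIter, Module.End.mul_eq_comp, ← Module.End.one_eq_id, Nat.cast_smul_eq_nsmul]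

lemma commute_pochIter (F : Module.End ℂ R) (n : ℕ) : Commute F (pochIter F n) := by
  rw [pochIter_eq_aeval_ascPochhammer]
  simpa using (Commute.all Polynomial.X (ascPochhammer ℂ n)).map (Polynomial.aeval F)

lemma pochIter_eq_pochIter_add_one_sub (F : Module.End ℂ R) (n : ℕ) :
    pochIter F n = pochIter (F + 1) n - (n : ℂ) • pochIter (F + 1) (n - 1) := by
  have aeval_comp (p : Polynomial ℂ) :
      Polynomial.aeval (F + 1) p = Polynomial.aeval F (p.comp (Polynomial.X + 1)) := by
    simp [Polynomial.aeval_comp]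
  cases n with
  | zero => simp [pochIter]
  | succ n =>
    simp only [pochIter_eq_aeval_ascPochhammer, aeval_comp, ascPochhammer_succ_comp_X_add_one,
      map_add, map_nsmul, Nat.cast_smul_eq_nsmul, Nat.add_sub_cancel, add_sub_cancel_right]

/-- The coefficient `(-1)ˢ vʳ (w + r)^{<s>}` with which the symbol `aʳ bˢ` acts. -/
noncomputable def jetCoeff (v w : Module.End ℂ R) (r s : ℕ) : Module.End ℂ R :=
  (-1 : ℂ) ^ s • (v ^ r * pochIter (w + (r : ℂ) • LinearMap.id) s)

lemma v_mul_jetCoeff (v w : Module.End ℂ R) (r s : ℕ) :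
    v * jetCoeff v w r s = jetCoeff v w (r + 1) s + (s : ℂ) • jetCoeff v w (r + 1) (s - 1) := by
  have hr : w + ((r + 1 : ℕ) : ℂ) • LinearMap.id = w + (r : ℂ) • LinearMap.id + 1 := by
    rw [Nat.cast_succ, add_smul, one_smul, add_assoc, Module.End.one_eq_id]
  rw [jetCoeff, jetCoeff, jetCoeff, hr, pochIter_eq_pochIter_add_one_sub, mul_smul_comm,
    ← mul_assoc, ← pow_succ', mul_sub, mul_smul_comm]
  cases s with
  | zero => simp
  | succ s => simp only [Nat.add_sub_cancel, pow_succ]; module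

lemma w_mul_jetCoeff {v w : Module.End ℂ R} (hvw : SemiconjBy v (w + 2) w) (r s : ℕ) :
    w * jetCoeff v w r s = -jetCoeff v w r (s + 1) + ((r : ℂ) - s) • jetCoeff v w r s := by
  set F : Module.End ℂ R := w + (r : ℂ) • LinearMap.id with hF
  have hpow : w * v ^ r = v ^ r * (F + (r : ℂ) • 1) := by
    have h := (semiconjBy_pow_left hvw (Commute.ofNat_right v 2) r).eq
    rw [← h, hF, ← Module.End.one_eq_id, nsmul_eq_mul, mul_two, Algebra.smul_def,
      map_natCast, mul_one, add_assoc]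
  have hsucc : pochIter F (s + 1) = F * pochIter F s + (s : ℂ) • pochIter F s := by
    rw [(commute_pochIter F s).eq]
    change pochIter F s * (F + (s : ℂ) • 1) = _
    rw [mul_add, mul_smul_comm, mul_one]
  simp only [jetCoeff, ← hF, hsucc, mul_smul_comm, ← mul_assoc, hpow]
  simp only [mul_add, add_mul, mul_assoc, mul_smul_comm, smul_mul_assoc, one_mul, pow_succ]
  module

/-- The jet of `f`: the linear map `aʳ bˢ ↦ (-1)ˢ vʳ (w + r)^{<s>} f` on symbols. -/
noncomputable def jet (v w : Module.End ℂ R) (f : R) : Symbol ℂ →ₗ[ℂ] R :=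
  (basisMonomials (Fin 2) ℂ).constr ℂ fun m => jetCoeff v w (m 0) (m 1) f

lemma jet_symbolMonomial (v w : Module.End ℂ R) (f : R) (r s : ℕ) :
    jet v w f (symbolMonomial ℂ r s) = jetCoeff v w r s f := by
  rw [symbolMonomial_eq_basisMonomials, jet, Module.Basis.constr_basis]
  simp

lemma jet_one (v w : Module.End ℂ R) (f : R) : jet v w f 1 = f := by
  simpa [symbolMonomial, jetCoeff, pochIter] using jet_symbolMonomial v w f 0 0

lemma isJet_jet {v w : Module.End ℂ R} (hvw : SemiconjBy v (w + 2) w) (f : R) :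
    IsJet v w (jet v w f) where
  comp_symbolV := symbol_hom_ext fun r s => by
    simpa only [LinearMap.comp_apply, symbolV_symbolMonomial, map_add, map_smul,
      jet_symbolMonomial, Module.End.mul_apply, LinearMap.add_apply, LinearMap.neg_apply,
      LinearMap.smul_apply] using LinearMap.congr_fun (v_mul_jetCoeff v w r s) f
  comp_symbolW := symbol_hom_ext fun r s => by
    simpa only [LinearMap.comp_apply, symbolW_symbolMonomial, map_add, map_neg, map_smul,
      jet_symbolMonomial, Module.End.mul_apply, LinearMap.add_apply, LinearMap.neg_apply,
      LinearMap.smul_apply] using LinearMap.congr_fun (w_mul_jetCoeff hvw r s) f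

end Jet

section Star

variable {R : Type*} [CommRing R] [Algebra ℂ R]

/-- The bracket `χ_n`, as the pairing of two jets with the `n`-th divided power of the Poisson
tensor. -/
noncomputable def starCoeff (v w : Module.End ℂ R) (n : ℕ) (f g : R) : R :=
  mulMap (jet v w f) (jet v w g) (dividedPow ℂ n (poissonTensor ℂ (X 0) (X 1)))

lemma starCoeff_eq_sum (v w : Module.End ℂ R) (n : ℕ) (f g : R) :
    starCoeff v w n f g = ∑ r ∈ range (n + 1),
      ((-1 : ℂ) ^ r / ((r.factorial : ℂ) * ((n - r).factorial : ℂ))) •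
        ((v ^ r) (pochIter (w + (r : ℂ) • LinearMap.id) (n - r) f) *
          (v ^ (n - r)) (pochIter (w + ((n - r : ℕ) : ℂ) • LinearMap.id) r g)) := by
  rw [starCoeff, dividedPow_poissonTensor, map_sum]
  refine sum_congr rfl fun r _ => ?_
  have hsign : (-1 : ℂ) ^ (n - r) * (-1) ^ (n - r) = 1 := by rw [← mul_pow]; simp
  simp only [map_smul, mulMap_tmul, jet_symbolMonomial, jetCoeff, LinearMap.smul_apply,
    Module.End.mul_apply, smul_mul_smul_comm, smul_smul]
  congr 1
  linear_combination
    ((-1) ^ r / ((r.factorial : ℂ) * ((n - r).factorial : ℂ))) * hsign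

lemma jet_starCoeff {V W : Derivation ℂ R R}
    (hVW : SemiconjBy V.toLinearMap (W.toLinearMap + 2) W.toLinearMap) (n : ℕ) (f g : R)
    (p : Symbol ℂ) :
    jet V.toLinearMap W.toLinearMap (starCoeff V.toLinearMap W.toLinearMap n f g) p =
      mulMap (jet V.toLinearMap W.toLinearMap f) (jet V.toLinearMap W.toLinearMap g)
        (primitiveCoproduct ℂ _ p * dividedPow ℂ n (poissonTensor ℂ (X 0) (X 1))) := by
  set v := V.toLinearMap
  set w := W.toLinearMap
  set Q := dividedPow ℂ n (poissonTensor ℂ (X 0 : Symbol ℂ) (X 1))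
  let T : Symbol ℂ →ₗ[ℂ] R := mulMap (jet v w f) (jet v w g) ∘ₗ
    LinearMap.mulRight ℂ Q ∘ₗ (primitiveCoproduct ℂ _).toLinearMap
  have hf := isJet_jet hVW f
  have hg := isJet_jet hVW g
  have hT : IsJet v w T := by
    constructor
    · rw [← LinearMap.comp_assoc, derivation_mulMap V hf.comp_symbolV hg.comp_symbolV]
      exact LinearMap.ext fun p => congrArg (mulMap _ _) (leibnizMap_symbolV
        (derivation_dividedPow_eq_zero _ tensorDerivation_derivationV_poissonTensor n) p)
    · rw [← LinearMap.comp_assoc, derivation_mulMap W hf.comp_symbolW hg.comp_symbolW]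
      exact LinearMap.ext fun p => congrArg (mulMap _ _) (leibnizMap_symbolW
        (derivation_dividedPow_eq_zero _ tensorDerivation_derivationW_poissonTensor n) p)
  have h_one : jet v w (starCoeff v w n f g) 1 = T 1 := by
    simp [T, jet_one, starCoeff, Q]
  exact LinearMap.congr_fun ((isJet_jet hVW _).ext hT h_one) p

lemma sum_starCoeff_assoc {V W : Derivation ℂ R R}
    (hVW : SemiconjBy V.toLinearMap (W.toLinearMap + 2) W.toLinearMap) (n : ℕ) (f g h : R) :
    ∑ r ∈ range (n + 1), starCoeff V.toLinearMap W.toLinearMap (n - r)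
        (starCoeff V.toLinearMap W.toLinearMap r f g) h =
      ∑ r ∈ range (n + 1), starCoeff V.toLinearMap W.toLinearMap (n - r) f
        (starCoeff V.toLinearMap W.toLinearMap r g h) :=
  sum_mulMap_twisted_assoc
    (poissonTensor_cocycle (primitiveCoproduct_X 0) (primitiveCoproduct_X 1))
    (fun r => jet_starCoeff hVW r f g) (fun r => jet_starCoeff hVW r g h) n

end Star

end ConnesMoscovici

/-- Connes–Moscovici: if `V`, `W` are derivations of a commutative
`ℂ`-algebra `R` with `W∘V − V∘W = 2V`, then the brackets
`χ_n(f,g) = Σ_{r=0}^n ((−1)^r/(r!(n−r)!)) (V^r∘(W+r·Id)^{<n−r>})(f) · (V^{n−r}∘(W+(n−r)·Id)^{<r>})(g)`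
form a formal deformation of `R`: `χ_0` is the product and the star product is
associative (equivalently, the associativity identities hold). -/
theorem stmt8 (R : Type*) [CommRing R] [Algebra ℂ R]
    (V W : Derivation ℂ R R)
    (hcomm : ∀ f : R, W (V f) - V (W f) = (2 : ℂ) • V f)
    (χ : ℕ → R → R → R)
    (hχ : ∀ (n : ℕ) (f g : R), χ n f g = ∑ r ∈ range (n + 1),
      ((-1 : ℂ) ^ r / ((r.factorial : ℂ) * ((n - r).factorial : ℂ))) •
        (((V.toLinearMap ^ r)
            (pochIter (W.toLinearMap + (r : ℂ) • LinearMap.id) (n - r) f)) *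
         ((V.toLinearMap ^ (n - r))
            (pochIter (W.toLinearMap + ((n - r : ℕ) : ℂ) • LinearMap.id) r g)))) :
    (∀ f g : R, χ 0 f g = f * g) ∧
    (∀ (n : ℕ) (f g h : R),
      ∑ r ∈ range (n + 1), χ (n - r) (χ r f g) h
        = ∑ r ∈ range (n + 1), χ (n - r) f (χ r g h)) := by
  have hχ_eq (n : ℕ) (f g : R) :
      χ n f g = ConnesMoscovici.starCoeff V.toLinearMap W.toLinearMap n f g := by
    rw [hχ, ConnesMoscovici.starCoeff_eq_sum]
  have hVW := ConnesMoscovici.semiconjBy_of_commutator_eq (v := V.toLinearMap) hcomm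
  refine ⟨fun f g => by simp [hχ, pochIter], fun n f g h => ?_⟩
  simp only [hχ_eq]
  exact ConnesMoscovici.sum_starCoeff_assoc hVW n f g h
end

section
/- Let J = C[E4, E6, A, B] be the bigraded polynomial algebra with (weight, index) of E4, E6, A, B equal to (4,0), (6,0), (−2,1), (0,1). For (a,b) ∈ C², let S_{a,b} be the derivation with S_{a,b}(E4) = −E6/3, S_{a,b}(E6) = −E4²/2, S_{a,b}(A) = aB, S_{a,b}(B) = bE4A. For c ∈ C and n ≥ 0 define {f,g}_n^{[a,b,c]} = Σ_{r=0}^n (−1)^r C(k+cp+n−1, n−r) C(ℓ+cq+n−1, r) S_{a,b}^r(f) S_{a,b}^{n−r}(g) for f of weight k and index p, g of weight ℓ and index q. Then ({·,·}_n^{[a,b,c]})_{n≥0} is a formal deformation of J, and {J_{k,p}, J_{ℓ,q}}_n^{[a,b,c]} ⊆ J_{k+ℓ+2n, p+q}. -/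
open Finset MvPolynomial

/-- The generalized binomial coefficient `C(x,m) = x(x−1)⋯(x−m+1)/m!`. -/
noncomputable def genBinom (x : ℂ) (m : ℕ) : ℂ :=
  (∏ i ∈ range m, (x - (i : ℂ))) / (m.factorial : ℂ)

/-- The (weight, index) bigrading of `J = ℂ[E4,E6,A,B]`:
`E4 ↦ (4,0)`, `E6 ↦ (6,0)`, `A ↦ (−2,1)`, `B ↦ (0,1)`. -/
def jacWt : Fin 4 → ℤ × ℤ := ![(4, 0), (6, 0), (-2, 1), (0, 1)]

/-!
Regard `J[ℤ × ℤ]` as the Laurent polynomials `J[w^±, z^±]`, and let `E` be the Euler derivation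
acting on `J_{k,p}` as `k + c p`. Since `⁅E, S⁆ = 2 S`, the derivations `X = ∂/∂z + w S` and
`Y = ∂/∂w - w⁻¹ E - z S` commute, so the Moyal product
`∑ n, ħ ^ n / n! • mul ∘ (X ⊗ Y - Y ⊗ X) ^ n` on `J[w^±, z^±]` is associative.
The vector fields `w ∂/∂z` and `w ∂/∂w - z ∂/∂z` act on the span of `X` and `Y` by matrices of
trace zero, hence are derivations of the Moyal product; the intersection of their kernels is `J`,
which is therefore closed under it. The product induced on `J` is the Rankin-Cohen one: if
`E f = κ f`, then modulo positive powers of `z` the element `Y ^ b (X ^ a f)` is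
`(-1) ^ b (κ + a + b - 1) ⋯ (κ + a) w ^ (a - b) S ^ a f`.
-/

section MoyalBracket

open scoped TensorProduct

theorem sum_inv_factorial_smul_pow_apply {K V : Type*} [Field K] [CharZero K] [AddCommGroup V]
    [Module K V] {u v : Module.End K V} (h : Commute u v) (n : ℕ) (x : V) :
    ∑ r ∈ range (n + 1), ((n - r).factorial * r.factorial : K)⁻¹ • (u ^ (n - r)) ((v ^ r) x) =
      (n.factorial : K)⁻¹ • ((u + v) ^ n) x := by
  rw [add_comm u v, h.symm.add_pow, LinearMap.sum_apply, smul_sum]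
  refine sum_congr rfl fun r hr => ?_
  have hr' : r ≤ n := Nat.lt_succ_iff.mp (mem_range.mp hr)
  have hn : (n.factorial : K) ≠ 0 := Nat.cast_ne_zero.mpr n.factorial_ne_zero
  rw [(h.symm.pow_pow r (n - r)).eq, Module.End.mul_apply, Module.End.mul_apply,
    Module.End.natCast_apply, map_nsmul, map_nsmul, ← Nat.cast_smul_eq_nsmul K,
    smul_smul (n.factorial : K)⁻¹, Nat.cast_choose K hr']
  congr 1
  field_simp

section Operators

variable {K : Type*} [CommRing K]

theorem commute_tensorMap {M N : Type*} [AddCommGroup M] [Module K M] [AddCommGroup N] [Module K N]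
    {f f' : Module.End K M} {g g' : Module.End K N} (hf : Commute f f') (hg : Commute g g') :
    Commute (TensorProduct.map f g : Module.End K (M ⊗[K] N)) (TensorProduct.map f' g') := by
  rw [Commute, SemiconjBy, ← TensorProduct.map_mul, hf.eq, hg.eq, TensorProduct.map_mul]

variable {R : Type*} [CommRing R] [Algebra K R]

/-- The operator `D ⊗ 1 + 1 ⊗ D` on the tensor square: the extension of `D` by the Leibniz rule. -/
noncomputable def leibnizTensor (D : Module.End K R) : Module.End K (R ⊗[K] R) :=
  TensorProduct.map D 1 + TensorProduct.map 1 D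

/-- The operator `X ⊗ Y - Y ⊗ X` on the tensor square, whose composite with multiplication is the
Poisson bracket of the bivector field `X ∧ Y`. -/
noncomputable def poissonTensor (X Y : Module.End K R) : Module.End K (R ⊗[K] R) :=
  TensorProduct.map X Y - TensorProduct.map Y X

/-- The operator `X₁ Y₃ + X₂ Y₃ - Y₁ X₃ - Y₂ X₃` on the tensor cube, the subscripts naming the
factors acted on: `poissonTensor` with its left argument a product of two factors. -/
noncomputable def poissonTensorLeft (X Y : Module.End K R) : Module.End K ((R ⊗[K] R) ⊗[K] R) :=
  TensorProduct.map (leibnizTensor X) Y - TensorProduct.map (leibnizTensor Y) X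

/-- The operator `X₁ Y₂ + X₁ Y₃ - Y₁ X₂ - Y₁ X₃` on the tensor cube, the subscripts naming the
factors acted on: `poissonTensor` with its right argument a product of two factors. -/
noncomputable def poissonTensorRight (X Y : Module.End K R) : Module.End K (R ⊗[K] (R ⊗[K] R)) :=
  TensorProduct.map X (leibnizTensor Y) - TensorProduct.map Y (leibnizTensor X)

-- The bivector `X ∧ Y` is preserved because `D` acts on the span of `X`, `Y` with trace zero.
theorem leibnizTensor_commute_poissonTensor {D X Y : Module.End K R} {α β γ : K}
    (hX : ⁅D, X⁆ = α • X + β • Y) (hY : ⁅D, Y⁆ = γ • X - α • Y) :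
    Commute (leibnizTensor D) (poissonTensor X Y) := by
  have hX' : D * X = X * D + (α • X + β • Y) := by rw [← hX, Ring.lie_def]; abel
  have hY' : D * Y = Y * D + (γ • X + -α • Y) := by
    rw [← sub_eq_iff_eq_add', ← Ring.lie_def, hY]; module
  simp only [Commute, SemiconjBy, leibnizTensor, poissonTensor, mul_sub, sub_mul, add_mul,
    mul_add, ← TensorProduct.map_mul, one_mul, mul_one, hX', hY', TensorProduct.map_add_left,
    TensorProduct.map_add_right, TensorProduct.map_smul_left, TensorProduct.map_smul_right]
  module

theorem leibnizTensor_commute_poissonTensor_of_commute {D X Y : Module.End K R}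
    (hX : Commute D X) (hY : Commute D Y) : Commute (leibnizTensor D) (poissonTensor X Y) :=
  leibnizTensor_commute_poissonTensor (α := 0) (β := 0) (γ := 0)
    (by simp [Ring.lie_def, hX.eq]) (by simp [Ring.lie_def, hY.eq])

theorem poissonTensorLeft_commute_rTensor {X Y : Module.End K R} (h : Commute X Y) :
    Commute (poissonTensorLeft X Y) ((poissonTensor X Y).rTensor R) :=
  Commute.sub_left (R := Module.End K ((R ⊗[K] R) ⊗[K] R))
    (commute_tensorMap (leibnizTensor_commute_poissonTensor_of_commute (.refl X) h)
      (.one_right Y))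
    (commute_tensorMap (leibnizTensor_commute_poissonTensor_of_commute h.symm (.refl Y))
      (.one_right X))

theorem poissonTensorRight_commute_lTensor {X Y : Module.End K R} (h : Commute X Y) :
    Commute (poissonTensorRight X Y) ((poissonTensor X Y).lTensor R) :=
  Commute.sub_left (R := Module.End K (R ⊗[K] (R ⊗[K] R)))
    (commute_tensorMap (.one_right X)
      (leibnizTensor_commute_poissonTensor_of_commute h.symm (.refl Y)))
    (commute_tensorMap (.one_right Y)
      (leibnizTensor_commute_poissonTensor_of_commute (.refl X) h))

theorem assoc_comp_poissonTensor (X Y : Module.End K R) :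
    (TensorProduct.assoc K R R R).toLinearMap ∘ₗ
        (poissonTensorLeft X Y + (poissonTensor X Y).rTensor R) =
      (poissonTensorRight X Y + (poissonTensor X Y).lTensor R) ∘ₗ
        (TensorProduct.assoc K R R R).toLinearMap := by
  refine TensorProduct.ext_threefold fun f g h => ?_
  simp only [poissonTensor, poissonTensorLeft, poissonTensorRight, leibnizTensor,
    LinearMap.comp_apply, LinearMap.add_apply, LinearMap.sub_apply, TensorProduct.map_tmul,
    LinearMap.rTensor_tmul, LinearMap.lTensor_tmul, TensorProduct.add_tmul, TensorProduct.tmul_add,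
    TensorProduct.sub_tmul, TensorProduct.tmul_sub, map_add, map_sub, LinearEquiv.coe_coe,
    TensorProduct.assoc_tmul, Module.End.one_apply]
  abel

theorem mul'_comp_leibnizTensor (D : Derivation K R R) :
    LinearMap.mul' K R ∘ₗ leibnizTensor D.toLinearMap = D.toLinearMap ∘ₗ LinearMap.mul' K R := by
  ext f g
  simp [leibnizTensor, mul_comm, add_comm]

theorem poissonTensor_comp_rTensor_mul' (X Y : Derivation K R R) :
    poissonTensor X.toLinearMap Y.toLinearMap ∘ₗ (LinearMap.mul' K R).rTensor R =
      (LinearMap.mul' K R).rTensor R ∘ₗ poissonTensorLeft X.toLinearMap Y.toLinearMap := by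
  simp only [poissonTensor, poissonTensorLeft, LinearMap.rTensor, LinearMap.sub_comp,
    LinearMap.comp_sub, ← TensorProduct.map_comp, mul'_comp_leibnizTensor, LinearMap.comp_id,
    LinearMap.id_comp]

theorem poissonTensor_comp_lTensor_mul' (X Y : Derivation K R R) :
    poissonTensor X.toLinearMap Y.toLinearMap ∘ₗ (LinearMap.mul' K R).lTensor R =
      (LinearMap.mul' K R).lTensor R ∘ₗ poissonTensorRight X.toLinearMap Y.toLinearMap := by
  simp only [poissonTensor, poissonTensorRight, LinearMap.lTensor, LinearMap.sub_comp,
    LinearMap.comp_sub, ← TensorProduct.map_comp, mul'_comp_leibnizTensor, LinearMap.comp_id,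
    LinearMap.id_comp]

theorem commute_toLinearMap_of_lie_eq_zero {X Y : Derivation K R R} (h : ⁅X, Y⁆ = 0) :
    Commute X.toLinearMap Y.toLinearMap :=
  LinearMap.ext fun f => sub_eq_zero.mp (DFunLike.congr_fun h f)

end Operators

variable {K R : Type*} [Field K] [CommRing R] [Algebra K R]

/-- The coefficient of `ħ ^ n` in the Moyal product of two derivations `X` and `Y`, namely
`1 / n! • mul ∘ (X ⊗ Y - Y ⊗ X) ^ n`. -/
noncomputable def moyalBracket (X Y : Derivation K R R) (n : ℕ) : R →ₗ[K] R →ₗ[K] R :=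
  (n.factorial : K)⁻¹ • (TensorProduct.mk K R R).compr₂
    (LinearMap.mul' K R ∘ₗ poissonTensor X.toLinearMap Y.toLinearMap ^ n)

variable (X Y : Derivation K R R)

theorem moyalBracket_apply (n : ℕ) (f g : R) :
    moyalBracket X Y n f g = (n.factorial : K)⁻¹ • LinearMap.mul' K R
      ((poissonTensor X.toLinearMap Y.toLinearMap ^ n) (f ⊗ₜ g)) :=
  rfl

theorem moyalBracket_zero (f g : R) : moyalBracket X Y 0 f g = f * g := by
  simp [moyalBracket_apply]

variable {X Y}

theorem derivation_moyalBracket {D : Derivation K R R} {α β γ : K}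
    (hX : ⁅D, X⁆ = α • X + β • Y) (hY : ⁅D, Y⁆ = γ • X - α • Y) (n : ℕ) (f g : R) :
    D (moyalBracket X Y n f g) = moyalBracket X Y n (D f) g + moyalBracket X Y n f (D g) := by
  have hX' : ⁅D.toLinearMap, X.toLinearMap⁆ = α • X.toLinearMap + β • Y.toLinearMap :=
    LinearMap.ext fun x => DFunLike.congr_fun hX x
  have hY' : ⁅D.toLinearMap, Y.toLinearMap⁆ = γ • X.toLinearMap - α • Y.toLinearMap :=
    LinearMap.ext fun x => DFunLike.congr_fun hY x
  have hcomm := LinearMap.congr_fun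
    ((leibnizTensor_commute_poissonTensor hX' hY').pow_right n).eq (f ⊗ₜ g)
  have hmul := LinearMap.congr_fun (mul'_comp_leibnizTensor D)
    ((poissonTensor X.toLinearMap Y.toLinearMap ^ n) (f ⊗ₜ g))
  simp only [Module.End.mul_apply, LinearMap.comp_apply, Derivation.coeFn_coe] at hcomm hmul
  rw [moyalBracket_apply, D.map_smul, ← hmul, hcomm, leibnizTensor]
  simp [moyalBracket_apply]

variable [CharZero K]

theorem moyalBracket_eq_sum (h : ⁅X, Y⁆ = 0) (n : ℕ) (f g : R) :
    moyalBracket X Y n f g = ∑ r ∈ range (n + 1),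
      ((-1) ^ (n - r) * ((n - r).factorial * r.factorial : K)⁻¹) •
        ((Y.toLinearMap ^ (n - r) * X.toLinearMap ^ r) f *
          (Y.toLinearMap ^ r * X.toLinearMap ^ (n - r)) g) := by
  have hXY : Commute X.toLinearMap Y.toLinearMap := commute_toLinearMap_of_lie_eq_zero h
  have hcomm : Commute
      ((-1 : K) • TensorProduct.map Y.toLinearMap X.toLinearMap : Module.End K (R ⊗[K] R))
      (TensorProduct.map X.toLinearMap Y.toLinearMap) :=
    (commute_tensorMap hXY.symm hXY).smul_left (-1)
  rw [moyalBracket_apply, poissonTensor, sub_eq_neg_add, ← neg_one_smul K, ← map_smul,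
    ← sum_inv_factorial_smul_pow_apply hcomm, map_sum]
  refine sum_congr rfl fun r _ => ?_
  rw [smul_pow, TensorProduct.map_pow, TensorProduct.map_pow, TensorProduct.map_tmul,
    LinearMap.smul_apply, TensorProduct.map_tmul, map_smul, map_smul, smul_smul, mul_comm (_)⁻¹,
    (hXY.symm.pow_pow r (n - r)).eq]
  rfl

theorem sum_moyalBracket_left (h : ⁅X, Y⁆ = 0) (n : ℕ) (f g k : R) :
    ∑ r ∈ range (n + 1), moyalBracket X Y (n - r) (moyalBracket X Y r f g) k =
      (n.factorial : K)⁻¹ • LinearMap.mul' K R ((LinearMap.mul' K R).rTensor R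
        (((poissonTensorLeft X.toLinearMap Y.toLinearMap +
          (poissonTensor X.toLinearMap Y.toLinearMap).rTensor R) ^ n) ((f ⊗ₜ g) ⊗ₜ k))) := by
  rw [← map_smul, ← map_smul, ← sum_inv_factorial_smul_pow_apply
    (poissonTensorLeft_commute_rTensor (commute_toLinearMap_of_lie_eq_zero h)), map_sum, map_sum]
  refine sum_congr rfl fun r _ => ?_
  have hpow := LinearMap.congr_fun
    (Module.End.commute_pow_left_of_commute (poissonTensor_comp_rTensor_mul' X Y) (n - r))
    ((poissonTensor X.toLinearMap Y.toLinearMap ^ r) (f ⊗ₜ g) ⊗ₜ k)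
  simp only [LinearMap.comp_apply, LinearMap.rTensor_tmul] at hpow
  simp only [map_smul, LinearMap.rTensor_pow, LinearMap.rTensor_tmul, ← hpow, moyalBracket_apply,
    LinearMap.smul_apply, mul_comm ((n - r).factorial : K), mul_inv, mul_smul]

theorem sum_moyalBracket_right (h : ⁅X, Y⁆ = 0) (n : ℕ) (f g k : R) :
    ∑ r ∈ range (n + 1), moyalBracket X Y (n - r) f (moyalBracket X Y r g k) =
      (n.factorial : K)⁻¹ • LinearMap.mul' K R ((LinearMap.mul' K R).lTensor R
        (((poissonTensorRight X.toLinearMap Y.toLinearMap +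
          (poissonTensor X.toLinearMap Y.toLinearMap).lTensor R) ^ n) (f ⊗ₜ (g ⊗ₜ k)))) := by
  rw [← map_smul, ← map_smul, ← sum_inv_factorial_smul_pow_apply
    (poissonTensorRight_commute_lTensor (commute_toLinearMap_of_lie_eq_zero h)), map_sum, map_sum]
  refine sum_congr rfl fun r _ => ?_
  have hpow := LinearMap.congr_fun
    (Module.End.commute_pow_left_of_commute (poissonTensor_comp_lTensor_mul' X Y) (n - r))
    (f ⊗ₜ (poissonTensor X.toLinearMap Y.toLinearMap ^ r) (g ⊗ₜ k))
  simp only [LinearMap.comp_apply, LinearMap.lTensor_tmul] at hpow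
  simp only [map_smul, LinearMap.lTensor_pow, LinearMap.lTensor_tmul, ← hpow, moyalBracket_apply,
    mul_comm ((n - r).factorial : K), mul_inv, mul_smul]

theorem moyalBracket_assoc (h : ⁅X, Y⁆ = 0) (n : ℕ) (f g k : R) :
    ∑ r ∈ range (n + 1), moyalBracket X Y (n - r) (moyalBracket X Y r f g) k =
      ∑ r ∈ range (n + 1), moyalBracket X Y (n - r) f (moyalBracket X Y r g k) := by
  have hmul : LinearMap.mul' K R ∘ₗ (LinearMap.mul' K R).rTensor R =
      LinearMap.mul' K R ∘ₗ (LinearMap.mul' K R).lTensor R ∘ₗ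
        (TensorProduct.assoc K R R R).toLinearMap :=
    TensorProduct.ext_threefold fun f g k => mul_assoc f g k
  have hmul' := LinearMap.congr_fun hmul
    (((poissonTensorLeft X.toLinearMap Y.toLinearMap +
      (poissonTensor X.toLinearMap Y.toLinearMap).rTensor R) ^ n) ((f ⊗ₜ g) ⊗ₜ k))
  have hpow := LinearMap.congr_fun (Module.End.commute_pow_left_of_commute
    (assoc_comp_poissonTensor X.toLinearMap Y.toLinearMap).symm n) ((f ⊗ₜ g) ⊗ₜ k)
  simp only [LinearMap.comp_apply, LinearEquiv.coe_coe, TensorProduct.assoc_tmul] at hmul' hpow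
  rw [sum_moyalBracket_left h, sum_moyalBracket_right h, hmul', hpow]

end MoyalBracket

section ShiftDerivation

open AddMonoidAlgebra

variable {K J M : Type*} [CommRing K] [CommRing J] [Algebra K J]

theorem single_mem_supported {s : Set M} {m : M} (hm : m ∈ s) (f : J) :
    single m f ∈ supported K J s := by
  rw [AddMonoidAlgebra.mem_supported, coeff_single]
  exact (Finset.coe_subset.mpr Finsupp.support_single_subset).trans (by simpa using hm)

theorem mul_mem_supported [Add M] {s t u : Set M} (hst : ∀ m ∈ s, ∀ m' ∈ t, m + m' ∈ u)
    {F G : J[M]} (hF : F ∈ supported K J s) (hG : G ∈ supported K J t) :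
    F * G ∈ supported K J u := by
  classical
  intro m hm
  obtain ⟨k, hk, l, hl, rfl⟩ := Finset.mem_add.mp (support_coeff_mul_subset F G hm)
  exact hst k (hF hk) l (hG hl)

theorem derivation_ext_single [AddCommMonoid M]
    {D D' : Derivation K J[M] J[M]}
    (h : ∀ m f, D (single m f) = D' (single m f)) : D = D' := by
  ext F : 1
  induction F using induction_linear with
  | zero => simp
  | add F F' hF hF' => rw [map_add, hF, hF', map_add]
  | single m f => exact h m f

variable [AddCommGroup M]

/-- The `K`-linear map `single m f ↦ single (a + m) (d f + χ m • f)` underlying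
`shiftDerivation`. -/
noncomputable def shiftLinearMap (a : M) (d : Derivation K J J) (χ : M →+ K) :
    J[M] →ₗ[K] J[M] :=
  Finsupp.lsum K (fun m => lsingle (a + m) ∘ₗ (d.toLinearMap + χ m • LinearMap.id)) ∘ₗ
    (coeffLinearEquiv K).toLinearMap

theorem shiftLinearMap_single (a : M) (d : Derivation K J J) (χ : M →+ K) (m : M) (f : J) :
    shiftLinearMap a d χ (single m f) = single (a + m) (d f + χ m • f) := by
  simp [shiftLinearMap]

theorem shiftLinearMap_mul (a : M) (d : Derivation K J J) (χ : M →+ K) (F G : J[M]) :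
    shiftLinearMap a d χ (F * G) = F • shiftLinearMap a d χ G + G • shiftLinearMap a d χ F := by
  induction F using induction_linear with
  | zero => simp
  | add F F' hF hF' => simp only [add_mul, map_add, hF, hF', add_smul, smul_add]; abel
  | single m f =>
    induction G using induction_linear with
    | zero => simp
    | add G G' hG hG' => simp only [mul_add, map_add, hG, hG', add_smul, smul_add]; abel
    | single k g =>
      simp only [single_mul_single, shiftLinearMap_single, smul_eq_mul]
      rw [add_left_comm m a k, add_left_comm k a m, add_comm k m, ← single_add]
      congr 1
      simp only [d.leibniz, map_add, add_smul, smul_eq_mul, mul_add, mul_smul_comm, mul_comm g f]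
      abel

/-- The derivation of the group algebra `J[M]` combining a shift of exponents by `a`, a derivation
`d` of the coefficients and the Euler derivation of an additive character `χ` of `M`. On Laurent
polynomials it specialises to monomial multiples of `d` and of the partial derivatives. -/
noncomputable def shiftDerivation (a : M) (d : Derivation K J J) (χ : M →+ K) :
    Derivation K J[M] J[M] :=
  Derivation.mk' (shiftLinearMap a d χ) (shiftLinearMap_mul a d χ)

theorem shiftDerivation_single (a : M) (d : Derivation K J J) (χ : M →+ K) (m : M) (f : J) :
    shiftDerivation a d χ (single m f) = single (a + m) (d f + χ m • f) :=
  shiftLinearMap_single a d χ m f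

theorem coeff_shiftDerivation (a : M) (d : Derivation K J J) (χ : M →+ K) (m : M) (F : J[M]) :
    (shiftDerivation a d χ F).coeff (a + m) = d (F.coeff m) + χ m • F.coeff m := by
  classical
  induction F using induction_linear with
  | zero => simp
  | add F F' hF hF' =>
    simp only [map_add, AddMonoidAlgebra.coeff_add, Finsupp.add_apply, hF, hF', smul_add]
    abel
  | single k f =>
    simp only [shiftDerivation_single, coeff_single, Finsupp.single_apply, add_right_inj]
    split_ifs with hk
    · rw [hk]
    · simp

theorem shiftDerivation_mem_supported {a : M} {d : Derivation K J J} {χ : M →+ K} {s t : Set M}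
    (hst : ∀ m ∈ s, a + m ∈ t) {F : J[M]} (hF : F ∈ supported K J s) :
    shiftDerivation a d χ F ∈ supported K J t := by
  rw [mem_supported'] at hF ⊢
  intro m hm
  have hFm : F.coeff (m - a) = 0 := hF _ fun hs => hm (by simpa using hst _ hs)
  rw [← add_sub_cancel a m, coeff_shiftDerivation, hFm, map_zero, smul_zero, add_zero]

end ShiftDerivation

section PlaneFields

open AddMonoidAlgebra

/-- The first coordinate as a `K`-valued character of `ℤ × ℤ`: the exponent of `w` in a monomial
`w ^ i * z ^ j`, or the weight in a (weight, index) bigrading. -/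
def castFst (K : Type*) [Ring K] : ℤ × ℤ →+ K := (Int.castAddHom K).comp (AddMonoidHom.fst ℤ ℤ)

/-- The second coordinate as a `K`-valued character of `ℤ × ℤ`: the exponent of `z` in a monomial
`w ^ i * z ^ j`, or the index in a (weight, index) bigrading. -/
def castSnd (K : Type*) [Ring K] : ℤ × ℤ →+ K := (Int.castAddHom K).comp (AddMonoidHom.snd ℤ ℤ)

variable {K J : Type*} [CommRing K] [CommRing J] [Algebra K J]

/-- The vector field `∂/∂z + w S` on the Laurent polynomials `J[w^±, z^±]`. -/
noncomputable def zField (S : Derivation K J J) : Derivation K J[ℤ × ℤ] J[ℤ × ℤ] :=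
  shiftDerivation (0, -1) 0 (castSnd K) + shiftDerivation (1, 0) S 0

/-- The vector field `∂/∂w - w⁻¹ E - z S` on the Laurent polynomials `J[w^±, z^±]`. It commutes
with `zField S` when `⁅E, S⁆ = 2 • S`. -/
noncomputable def wField (S E : Derivation K J J) : Derivation K J[ℤ × ℤ] J[ℤ × ℤ] :=
  shiftDerivation (-1, 0) (-E) (castFst K) - shiftDerivation (0, 1) S 0

/-- The vector field `w ∂/∂z` on the Laurent polynomials `J[w^±, z^±]`. -/
noncomputable def shear (K J : Type*) [CommRing K] [CommRing J] [Algebra K J] :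
    Derivation K J[ℤ × ℤ] J[ℤ × ℤ] :=
  shiftDerivation (1, -1) 0 (castSnd K)

/-- The vector field `w ∂/∂w - z ∂/∂z` on the Laurent polynomials `J[w^±, z^±]`. -/
noncomputable def squeeze (K J : Type*) [CommRing K] [CommRing J] [Algebra K J] :
    Derivation K J[ℤ × ℤ] J[ℤ × ℤ] :=
  shiftDerivation 0 0 (castFst K - castSnd K)

variable {S E : Derivation K J J}

theorem zField_single (i j : ℤ) (f : J) :
    zField S (single (i, j) f) = (j : K) • single (i, j - 1) f + single (i + 1, j) (S f) := by
  simp [zField, castSnd, shiftDerivation_single, add_comm, ← sub_eq_add_neg]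

theorem wField_single (i j : ℤ) (f : J) : wField S E (single (i, j) f) =
    (i : K) • single (i - 1, j) f - single (i - 1, j) (E f) - single (i, j + 1) (S f) := by
  simp [wField, castFst, shiftDerivation_single, add_comm, ← sub_eq_add_neg]

theorem shear_single (i j : ℤ) (f : J) :
    shear K J (single (i, j) f) = (j : K) • single (i + 1, j - 1) f := by
  simp [shear, castSnd, shiftDerivation_single, add_comm, ← sub_eq_add_neg]

theorem squeeze_single (i j : ℤ) (f : J) :
    squeeze K J (single (i, j) f) = ((i : K) - j) • single (i, j) f := by
  simp [squeeze, castFst, castSnd, shiftDerivation_single]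

theorem apply_apply_of_lie (h : ⁅E, S⁆ = (2 : K) • S) (f : J) :
    E (S f) = S (E f) + (2 : K) • S f :=
  sub_eq_iff_eq_add'.mp (DFunLike.congr_fun h f)

theorem lie_zField_wField (h : ⁅E, S⁆ = (2 : K) • S) : ⁅zField S, wField S E⁆ = 0 := by
  refine derivation_ext_single fun ⟨i, j⟩ f => ?_
  simp only [Derivation.commutator_apply, zField_single, wField_single, apply_apply_of_lie h,
    map_add, map_sub, Derivation.map_smul, sub_add_cancel, add_sub_cancel_right, single_add,
    ← smul_single, Int.cast_add, Int.cast_one, Derivation.zero_apply]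
  module

theorem lie_shear_zField : ⁅shear K J, zField S⁆ = 0 := by
  refine derivation_ext_single fun ⟨i, j⟩ f => ?_
  simp only [Derivation.commutator_apply, zField_single, shear_single, map_add,
    Derivation.map_smul, Int.cast_sub, Int.cast_one, Derivation.zero_apply]
  module

theorem lie_shear_wField : ⁅shear K J, wField S E⁆ = -zField S := by
  refine derivation_ext_single fun ⟨i, j⟩ f => ?_
  simp only [Derivation.commutator_apply, zField_single, wField_single, shear_single, map_sub,
    Derivation.map_smul, Int.cast_add, Int.cast_one, Derivation.neg_apply, sub_add_cancel,
    add_sub_cancel_right]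
  module

theorem lie_squeeze_zField : ⁅squeeze K J, zField S⁆ = zField S := by
  refine derivation_ext_single fun ⟨i, j⟩ f => ?_
  simp only [Derivation.commutator_apply, zField_single, squeeze_single, map_add,
    Derivation.map_smul, Int.cast_sub, Int.cast_add, Int.cast_one]
  module

theorem lie_squeeze_wField : ⁅squeeze K J, wField S E⁆ = -wField S E := by
  refine derivation_ext_single fun ⟨i, j⟩ f => ?_
  simp only [Derivation.commutator_apply, wField_single, squeeze_single, map_sub,
    Derivation.map_smul, Int.cast_sub, Int.cast_add, Int.cast_one, Derivation.neg_apply]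
  module

theorem shear_single_zero (f : J) : shear K J (single 0 f) = 0 := by
  simp [shear, shiftDerivation_single]

theorem squeeze_single_zero (f : J) : squeeze K J (single 0 f) = 0 := by
  simp [squeeze, shiftDerivation_single]

theorem coeff_shear (m : ℤ × ℤ) (F : J[ℤ × ℤ]) :
    (shear K J F).coeff ((1, -1) + m) = (m.2 : K) • F.coeff m :=
  (coeff_shiftDerivation (1, -1) 0 (castSnd K) m F).trans (zero_add _)

theorem coeff_squeeze (m : ℤ × ℤ) (F : J[ℤ × ℤ]) :
    (squeeze K J F).coeff (0 + m) = ((m.1 : K) - m.2) • F.coeff m :=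
  (coeff_shiftDerivation 0 0 (castFst K - castSnd K) m F).trans (zero_add _)

end PlaneFields

section RankinCohen

open AddMonoidAlgebra

variable {K J : Type*} [Field K] [CommRing J] [Algebra K J] {S E : Derivation K J J}

theorem eq_single_zero_of_shear_of_squeeze [CharZero K] {F : J[ℤ × ℤ]}
    (hshear : shear K J F = 0) (hsqueeze : squeeze K J F = 0) : F = single 0 (F.coeff 0) := by
  ext m
  by_cases hm : m = 0
  · rw [hm, coeff_single, Finsupp.single_eq_same]
  rw [coeff_single, Finsupp.single_eq_of_ne hm]
  have hz : (m.2 : K) • F.coeff m = 0 := by rw [← coeff_shear, hshear]; rfl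
  have hw : ((m.1 : K) - m.2) • F.coeff m = 0 := by rw [← coeff_squeeze, hsqueeze]; rfl
  by_contra hF
  have hm2 : (m.2 : K) = 0 := (smul_eq_zero.mp hz).resolve_right hF
  have hm1 : (m.1 : K) = 0 := by
    simpa only [hm2, sub_zero] using (smul_eq_zero.mp hw).resolve_right hF
  exact hm (Prod.ext (Int.cast_eq_zero.mp hm1) (Int.cast_eq_zero.mp hm2))

theorem moyalBracket_single_zero [CharZero K] (n : ℕ) (f g : J) :
    moyalBracket (zField S) (wField S E) n (single 0 f) (single 0 g) =
      single 0 ((moyalBracket (zField S) (wField S E) n (single 0 f) (single 0 g)).coeff 0) := by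
  apply eq_single_zero_of_shear_of_squeeze (K := K)
  · rw [derivation_moyalBracket (α := 0) (β := 0) (γ := -1)]
    · simp [shear_single_zero]
    · simp [lie_shear_zField]
    · rw [lie_shear_wField]; module
  · rw [derivation_moyalBracket (α := 1) (β := 0) (γ := 0)]
    · simp [squeeze_single_zero]
    · simp [lie_squeeze_zField]
    · simp [lie_squeeze_wField]

variable (S E) in
/-- The `n`-th Rankin-Cohen bracket on `J` for a derivation `S` and a grading derivation `E` with
`⁅E, S⁆ = 2 • S`, encoded as the restriction to `J` of the Moyal bracket of `zField S` and
`wField S E`; `rankinCohen_eq_sum` is the classical formula. -/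
noncomputable def rankinCohen (n : ℕ) : J →ₗ[K] J →ₗ[K] J :=
  ((moyalBracket (zField S) (wField S E) n).compl₁₂ (lsingle 0) (lsingle 0)).compr₂
    (Finsupp.lapply 0 ∘ₗ (coeffLinearEquiv K).toLinearMap)

theorem rankinCohen_apply (n : ℕ) (f g : J) : rankinCohen S E n f g =
    (moyalBracket (zField S) (wField S E) n (single 0 f) (single 0 g)).coeff 0 :=
  rfl

theorem rankinCohen_zero (f g : J) : rankinCohen S E 0 f g = f * g := by
  simp [rankinCohen_apply, moyalBracket_zero, single_mul_single]

theorem rankinCohen_assoc [CharZero K] (h : ⁅E, S⁆ = (2 : K) • S) (n : ℕ) (f g k : J) :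
    ∑ r ∈ range (n + 1), rankinCohen S E (n - r) (rankinCohen S E r f g) k =
      ∑ r ∈ range (n + 1), rankinCohen S E (n - r) f (rankinCohen S E r g k) := by
  have hassoc := congr_arg (fun F => F.coeff 0)
    (moyalBracket_assoc (lie_zField_wField h) n (single 0 f) (single 0 g) (single 0 k))
  simpa [rankinCohen_apply, ← moyalBracket_single_zero] using hassoc

end RankinCohen

section RankinCohenFormula

open AddMonoidAlgebra

section LeadingTerms

variable {K J : Type*} [CommRing K] [CommRing J] [Algebra K J] {S E : Derivation K J J}

/-- The Laurent polynomials in `w` and `z` all of whose monomials contain a positive power of `z`.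
Working modulo this submodule isolates the coefficient of `w ^ 0 * z ^ 0` in products of elements
without negative powers of `z`. -/
noncomputable def zPositive (K J : Type*) [CommRing K] [CommRing J] [Algebra K J] :
    Submodule K J[ℤ × ℤ] :=
  supported K J {m | 0 < m.2}

theorem wField_mem_zPositive {F : J[ℤ × ℤ]} (hF : F ∈ zPositive K J) :
    wField S E F ∈ zPositive K J := by
  refine Submodule.sub_mem _ (shiftDerivation_mem_supported ?_ hF)
    (shiftDerivation_mem_supported ?_ hF)
  · rintro ⟨i, j⟩ hj
    simpa using hj
  · rintro ⟨i, j⟩ (hj : 0 < j)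
    exact add_pos one_pos hj

theorem coeff_zero_mul_of_sub_mem_zPositive {F G : J[ℤ × ℤ]} {i : ℤ} {u v : J}
    (hF : F - single (i, 0) u ∈ zPositive K J) (hG : G - single (-i, 0) v ∈ zPositive K J) :
    (F * G).coeff 0 = u * v := by
  have hle : zPositive K J ≤ supported K J {m : ℤ × ℤ | 0 ≤ m.2} :=
    supported_mono (Set.ofPred_subset_ofPred.mpr fun m hm => le_of_lt hm)
  have hu : single (i, 0) u ∈ supported K J {m : ℤ × ℤ | 0 ≤ m.2} :=
    single_mem_supported (by simp) u
  have hG' : G ∈ supported K J {m : ℤ × ℤ | 0 ≤ m.2} := by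
    rw [← sub_add_cancel G (single (-i, 0) v)]
    exact Submodule.add_mem _ (hle hG) (single_mem_supported (by simp) v)
  have hFG : (F - single (i, 0) u) * G ∈ zPositive K J := by
    refine mul_mem_supported (fun m hm m' hm' => ?_) hF hG'
    exact add_pos_of_pos_of_nonneg (α := ℤ) hm hm'
  have huG : single (i, 0) u * (G - single (-i, 0) v) ∈ zPositive K J := by
    refine mul_mem_supported (fun m hm m' hm' => ?_) hu hG
    exact add_pos_of_nonneg_of_pos (α := ℤ) hm hm'
  have huv : single (0 : ℤ × ℤ) (u * v) = single (i, 0) u * single (-i, 0) v := by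
    rw [single_mul_single, Prod.mk_add_mk, add_neg_cancel, add_zero, Prod.mk_zero_zero]
  have hsub : F * G - single 0 (u * v) ∈ zPositive K J := by
    rw [huv, ← sub_add_sub_cancel _ (single (i, 0) u * G), ← sub_mul, ← mul_sub]
    exact Submodule.add_mem _ hFG huG
  have hcoeff := mem_supported'.mp hsub 0 (by simp)
  rwa [AddMonoidAlgebra.coeff_sub, Finsupp.sub_apply, coeff_single, Finsupp.single_eq_same,
    sub_eq_zero] at hcoeff

theorem zField_pow_single_zero (a : ℕ) (f : J) :
    ((zField S).toLinearMap ^ a) (single 0 f) =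
      single ((a : ℤ), (0 : ℤ)) ((S.toLinearMap ^ a) f) := by
  induction a with
  | zero => rfl
  | succ a ih =>
    rw [pow_succ', Module.End.mul_apply, ih, Derivation.coeFn_coe, zField_single, Int.cast_zero,
      zero_smul, zero_add, pow_succ', Nat.cast_succ]
    rfl

theorem wField_pow_single_sub_mem_zPositive {u : J} {ε : K} (hu : E u = ε • u) (i : ℤ) (b : ℕ) :
    ((wField S E).toLinearMap ^ b) (single (i, 0) u) -
      single (i - b, 0) ((∏ j ∈ range b, ((i : K) - j - ε)) • u) ∈ zPositive K J := by
  induction b with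
  | zero => simp
  | succ b ih =>
    have hw := wField_mem_zPositive (S := S) (E := E) ih
    have hS : single (i - b, 1) (S ((∏ j ∈ range b, ((i : K) - j - ε)) • u)) ∈ zPositive K J :=
      single_mem_supported (by simp) _
    convert Submodule.sub_mem _ hw hS using 1
    have hi : i - (b + 1 : ℕ) = i - b - 1 := by push_cast; ring
    rw [pow_succ', Module.End.mul_apply, map_sub, wField_single, Derivation.coeFn_coe,
      E.map_smul, hu, zero_add, prod_range_succ, Int.cast_sub, Int.cast_natCast, hi]
    simp only [← smul_single]
    module

theorem apply_pow_apply_of_lie (h : ⁅E, S⁆ = (2 : K) • S) {f : J} {κ : K} (hf : E f = κ • f)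
    (a : ℕ) : E ((S.toLinearMap ^ a) f) = (κ + 2 * a) • (S.toLinearMap ^ a) f := by
  induction a with
  | zero => simpa using hf
  | succ a ih =>
    rw [pow_succ', Module.End.mul_apply, Derivation.coeFn_coe,
      apply_apply_of_lie h, ih, S.map_smul, ← add_smul]
    push_cast
    congr 1
    ring

theorem prod_range_sub_sub_add_two_mul (κ : K) (a b : ℕ) :
    ∏ j ∈ range b, ((a : K) - j - (κ + 2 * a)) =
      (-1) ^ b * ∏ i ∈ range b, (κ + (a + b : ℕ) - 1 - i) := by
  rw [← prod_range_reflect, ← card_range b, ← prod_const, card_range, ← prod_mul_distrib]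
  refine prod_congr rfl fun i hi => ?_
  have hib : i + 1 ≤ b := mem_range.mp hi
  rw [Nat.sub_sub, add_comm 1 i, Nat.cast_sub hib]
  push_cast
  ring

theorem wField_pow_mul_zField_pow_sub_mem_zPositive (h : ⁅E, S⁆ = (2 : K) • S) {f : J} {κ : K}
    (hf : E f = κ • f) (a b : ℕ) :
    ((wField S E).toLinearMap ^ b * (zField S).toLinearMap ^ a) (single 0 f) -
      single ((a : ℤ) - b, 0) (((-1) ^ b * ∏ i ∈ range b, (κ + (a + b : ℕ) - 1 - i)) •
        (S.toLinearMap ^ a) f) ∈ zPositive K J := by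
  have hlead := wField_pow_single_sub_mem_zPositive (S := S) (apply_pow_apply_of_lie h hf a) a b
  rw [Int.cast_natCast, prod_range_sub_sub_add_two_mul] at hlead
  rwa [Module.End.mul_apply, zField_pow_single_zero]

end LeadingTerms

theorem rankinCohen_eq_sum {K J : Type*} [Field K] [CharZero K] [CommRing J] [Algebra K J]
    {S E : Derivation K J J} (h : ⁅E, S⁆ = (2 : K) • S) {f g : J} {κ l : K}
    (hf : E f = κ • f) (hg : E g = l • g) (n : ℕ) :
    rankinCohen S E n f g = ∑ r ∈ range (n + 1),
      ((-1) ^ r * ((∏ i ∈ range (n - r), (κ + n - 1 - i)) / (n - r).factorial) *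
        ((∏ i ∈ range r, (l + n - 1 - i)) / r.factorial)) •
        ((S.toLinearMap ^ r) f * (S.toLinearMap ^ (n - r)) g) := by
  rw [rankinCohen_apply, moyalBracket_eq_sum (lie_zField_wField h), AddMonoidAlgebra.coeff_sum,
    Finsupp.finsetSum_apply]
  refine sum_congr rfl fun r hr => ?_
  have hrn : r + (n - r) = n := Nat.add_sub_cancel' (Nat.lt_succ_iff.mp (mem_range.mp hr))
  have hF := wField_pow_mul_zField_pow_sub_mem_zPositive h hf r (n - r)
  rw [hrn] at hF
  have hG := wField_pow_mul_zField_pow_sub_mem_zPositive h hg (n - r) r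
  rw [← neg_sub (r : ℤ), add_comm (n - r), hrn] at hG
  have hsign : (-1 : K) ^ (n - r) * (-1) ^ (n - r) = 1 := by rw [← mul_pow]; simp
  rw [AddMonoidAlgebra.coeff_smul, Finsupp.smul_apply,
    coeff_zero_mul_of_sub_mem_zPositive hF hG, smul_mul_smul_comm, smul_smul]
  congr 1
  linear_combination ((∏ i ∈ range (n - r), (κ + n - 1 - i)) / (n - r).factorial *
    ((∏ i ∈ range r, (l + n - 1 - i)) / r.factorial) * (-1) ^ r) * hsign

end RankinCohenFormula

section GradedDerivation

theorem pow_apply_mem_graded {K J ι : Type*} [CommSemiring K] [CommSemiring J] [Algebra K J]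
    [AddMonoid ι] {𝒜 : ι → Submodule K J} {S : Derivation K J J} {d : ι}
    (hS : ∀ i, ∀ f ∈ 𝒜 i, S f ∈ 𝒜 (i + d)) {i : ι} {f : J} (hf : f ∈ 𝒜 i) (r : ℕ) :
    (S.toLinearMap ^ r) f ∈ 𝒜 (i + r • d) := by
  induction r with
  | zero => simpa using hf
  | succ r ih =>
    rw [pow_succ', succ_nsmul, ← add_assoc]
    exact hS _ _ ih

theorem pow_apply_mul_pow_apply_mem_graded {K J ι : Type*} [CommSemiring K] [CommSemiring J]
    [Algebra K J] [AddCommMonoid ι] {𝒜 : ι → Submodule K J} [SetLike.GradedMonoid 𝒜]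
    {S : Derivation K J J} {d : ι} (hS : ∀ i, ∀ f ∈ 𝒜 i, S f ∈ 𝒜 (i + d)) {i j : ι} {f g : J}
    (hf : f ∈ 𝒜 i) (hg : g ∈ 𝒜 j) (r s : ℕ) :
    (S.toLinearMap ^ r) f * (S.toLinearMap ^ s) g ∈ 𝒜 (i + j + (r + s) • d) := by
  rw [add_nsmul, add_add_add_comm]
  exact SetLike.mul_mem_graded (pow_apply_mem_graded hS hf r) (pow_apply_mem_graded hS hg s)

theorem derivation_mem_weightedHomogeneousSubmodule {σ R M : Type*} [CommSemiring R]
    [AddCommMonoid M] {w : σ → M} {d m : M}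
    {D : Derivation R (MvPolynomial σ R) (MvPolynomial σ R)}
    (hD : ∀ i, D (X i) ∈ weightedHomogeneousSubmodule R w (w i + d)) {f : MvPolynomial σ R}
    (hf : f ∈ weightedHomogeneousSubmodule R w m) :
    D f ∈ weightedHomogeneousSubmodule R w (m + d) := by
  induction hf using IsWeightedHomogeneous.induction_on with
  | zero => simp
  | add f g _ _ hf hg => rw [map_add]; exact Submodule.add_mem _ hf hg
  | monomial s r hs =>
    have hDX : mkDerivation R (fun i => D (X i)) = D := derivation_ext (mkDerivation_X R _)
    rw [← hDX, mkDerivation_monomial]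
    refine Submodule.smul_mem _ _ (Submodule.sum_mem _ fun i hi => ?_)
    have hw : Finsupp.weight w (s - Finsupp.single i 1) + (w i + d) = m + d := by
      rw [← add_assoc, Finsupp.weight_sub_single_add (Finsupp.mem_support_iff.mp hi), hs]
    rw [← hw]
    exact (isWeightedHomogeneous_monomial w _ _ rfl).mul (hD i)

variable {K J ι : Type*} [CommRing K] [CommRing J] [Algebra K J] [AddMonoid ι] [DecidableEq ι]

/-- The `K`-linear map multiplying the component of degree `i` by `χ i`, underlying
`eulerDerivation`. -/
noncomputable def eulerLinearMap (𝒜 : ι → Submodule K J) [GradedAlgebra 𝒜] (χ : ι →+ K) :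
    J →ₗ[K] J :=
  DirectSum.toModule K ι J (fun i => χ i • (𝒜 i).subtype) ∘ₗ
    (DirectSum.decomposeLinearEquiv 𝒜).toLinearMap

theorem eulerLinearMap_apply_of_mem {𝒜 : ι → Submodule K J} [GradedAlgebra 𝒜] (χ : ι →+ K) {i : ι}
    {f : J} (hf : f ∈ 𝒜 i) : eulerLinearMap 𝒜 χ f = χ i • f := by
  lift f to 𝒜 i using hf
  rw [eulerLinearMap, LinearMap.comp_apply, LinearEquiv.coe_coe,
    DirectSum.decomposeLinearEquiv_apply_coe, DirectSum.toModule_lof]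
  rfl

theorem eulerLinearMap_mul (𝒜 : ι → Submodule K J) [GradedAlgebra 𝒜] (χ : ι →+ K) (f g : J) :
    eulerLinearMap 𝒜 χ (f * g) = f • eulerLinearMap 𝒜 χ g + g • eulerLinearMap 𝒜 χ f := by
  induction f using DirectSum.Decomposition.inductionOn 𝒜 with
  | zero => simp
  | add f f' hf hf' => simp only [add_mul, map_add, hf, hf', add_smul, smul_add]; abel
  | homogeneous f =>
    induction g using DirectSum.Decomposition.inductionOn 𝒜 with
    | zero => simp
    | add g g' hg hg' => simp only [mul_add, map_add, hg, hg', add_smul, smul_add]; abel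
    | homogeneous g =>
      rw [eulerLinearMap_apply_of_mem χ f.2, eulerLinearMap_apply_of_mem χ g.2,
        eulerLinearMap_apply_of_mem χ (SetLike.mul_mem_graded f.2 g.2), map_add, add_smul,
        smul_eq_mul, smul_eq_mul, mul_smul_comm, mul_smul_comm, mul_comm g.1, add_comm]

/-- The Euler derivation of a graded algebra attached to an additive character `χ` of the grading
monoid: it multiplies the component of degree `i` by `χ i`. -/
noncomputable def eulerDerivation (𝒜 : ι → Submodule K J) [GradedAlgebra 𝒜] (χ : ι →+ K) :
    Derivation K J J :=
  Derivation.mk' (eulerLinearMap 𝒜 χ) (eulerLinearMap_mul 𝒜 χ)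

variable {𝒜 : ι → Submodule K J} [GradedAlgebra 𝒜]

theorem eulerDerivation_apply_of_mem (χ : ι →+ K) {i : ι} {f : J} (hf : f ∈ 𝒜 i) :
    eulerDerivation 𝒜 χ f = χ i • f :=
  eulerLinearMap_apply_of_mem χ hf

theorem lie_eulerDerivation (χ : ι →+ K) {S : Derivation K J J} {d : ι}
    (hS : ∀ i, ∀ f ∈ 𝒜 i, S f ∈ 𝒜 (i + d)) : ⁅eulerDerivation 𝒜 χ, S⁆ = χ d • S := by
  ext f
  induction f using DirectSum.Decomposition.inductionOn 𝒜 with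
  | zero => simp
  | add f f' hf hf' => rw [map_add, map_add, hf, hf']
  | homogeneous f =>
    rw [Derivation.commutator_apply, eulerDerivation_apply_of_mem χ f.2,
      eulerDerivation_apply_of_mem χ (hS _ _ f.2), S.map_smul, map_add, add_smul,
      add_sub_cancel_left]
    rfl

end GradedDerivation

/-- The character `(k, p) ↦ k + c * p` of the (weight, index) bigrading group; its values are the
eigenvalues entering the binomial coefficients of the bracket `{·,·}_n^{[a,b,c]}`. -/
noncomputable def twistedWeight (c : ℂ) : ℤ × ℤ →+ ℂ :=
  castFst ℂ + (AddMonoidHom.mulLeft c).comp (castSnd ℂ)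

theorem lie_eulerDerivation_twistedWeight {J : Type*} [CommRing J] [Algebra ℂ J]
    {𝒜 : ℤ × ℤ → Submodule ℂ J} [GradedAlgebra 𝒜] (c : ℂ) {S : Derivation ℂ J J}
    (hS : ∀ i, ∀ f ∈ 𝒜 i, S f ∈ 𝒜 (i + (2, 0))) :
    ⁅eulerDerivation 𝒜 (twistedWeight c), S⁆ = (2 : ℂ) • S := by
  rw [lie_eulerDerivation _ hS]
  simp [twistedWeight, castFst, castSnd]

theorem rankinCohen_twistedWeight_eq_sum {J : Type*} [CommRing J] [Algebra ℂ J]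
    {𝒜 : ℤ × ℤ → Submodule ℂ J} [GradedAlgebra 𝒜] (c : ℂ) {S : Derivation ℂ J J}
    (hS : ∀ i, ∀ f ∈ 𝒜 i, S f ∈ 𝒜 (i + (2, 0))) (n : ℕ) (k p ℓ q : ℤ) (f g : J)
    (hf : f ∈ 𝒜 (k, p)) (hg : g ∈ 𝒜 (ℓ, q)) :
    rankinCohen S (eulerDerivation 𝒜 (twistedWeight c)) n f g = ∑ r ∈ range (n + 1),
      ((-1 : ℂ) ^ r * genBinom ((k : ℂ) + c * (p : ℂ) + n - 1) (n - r)
          * genBinom ((ℓ : ℂ) + c * (q : ℂ) + n - 1) r) •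
        ((S.toLinearMap ^ r) f * (S.toLinearMap ^ (n - r)) g) :=
  rankinCohen_eq_sum (lie_eulerDerivation_twistedWeight c hS)
    (eulerDerivation_apply_of_mem _ hf) (eulerDerivation_apply_of_mem _ hg) n

theorem stmt10_general {J : Type*} [CommRing J] [Algebra ℂ J] (𝒜 : ℤ × ℤ → Submodule ℂ J)
    [GradedAlgebra 𝒜] (c : ℂ) (S : Derivation ℂ J J)
    (hS : ∀ i, ∀ f ∈ 𝒜 i, S f ∈ 𝒜 (i + (2, 0))) :
    ∃ μ : ℕ → J →ₗ[ℂ] J →ₗ[ℂ] J,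
      (∀ (n : ℕ) (k p ℓ q : ℤ) (f g : J), f ∈ 𝒜 (k, p) → g ∈ 𝒜 (ℓ, q) →
        μ n f g = ∑ r ∈ range (n + 1),
          ((-1 : ℂ) ^ r * genBinom ((k : ℂ) + c * (p : ℂ) + n - 1) (n - r)
              * genBinom ((ℓ : ℂ) + c * (q : ℂ) + n - 1) r) •
            ((S.toLinearMap ^ r) f * (S.toLinearMap ^ (n - r)) g)) ∧
      (∀ f g, μ 0 f g = f * g) ∧
      (∀ (n : ℕ) (f g h : J),
        ∑ r ∈ range (n + 1), μ (n - r) (μ r f g) h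
          = ∑ r ∈ range (n + 1), μ (n - r) f (μ r g h)) ∧
      (∀ (n : ℕ) (k p ℓ q : ℤ) (f g : J), f ∈ 𝒜 (k, p) → g ∈ 𝒜 (ℓ, q) →
        μ n f g ∈ 𝒜 (k + ℓ + 2 * n, p + q)) := by
  refine ⟨rankinCohen S (eulerDerivation 𝒜 (twistedWeight c)),
    rankinCohen_twistedWeight_eq_sum c hS, rankinCohen_zero,
    rankinCohen_assoc (lie_eulerDerivation_twistedWeight c hS), fun n k p ℓ q f g hf hg => ?_⟩
  rw [rankinCohen_twistedWeight_eq_sum c hS n k p ℓ q f g hf hg]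
  refine Submodule.sum_mem _ fun r hr => Submodule.smul_mem _ _ ?_
  have hrn : r + (n - r) = n := Nat.add_sub_cancel' (Nat.lt_succ_iff.mp (mem_range.mp hr))
  convert pow_apply_mul_pow_apply_mem_graded hS hf hg r (n - r) using 2
  ext <;> simp [hrn, mul_comm]

theorem derivation_X_mem_weightedHomogeneousSubmodule_jacWt {a b : ℂ}
    {S : Derivation ℂ (MvPolynomial (Fin 4) ℂ) (MvPolynomial (Fin 4) ℂ)}
    (hS4 : S (X 0) = (-(1 / 3) : ℂ) • X 1) (hS6 : S (X 1) = (-(1 / 2) : ℂ) • X 0 ^ 2)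
    (hSA : S (X 2) = a • X 3) (hSB : S (X 3) = b • (X 0 * X 2)) (i : Fin 4) :
    S (X i) ∈ weightedHomogeneousSubmodule ℂ jacWt (jacWt i + (2, 0)) := by
  have hX := fun i => isWeightedHomogeneous_X ℂ jacWt i
  match i with
  | 0 => rw [hS4]; exact Submodule.smul_mem _ _ (hX 1)
  | 1 => rw [hS6]; exact Submodule.smul_mem _ _ ((hX 0).pow 2)
  | 2 => rw [hSA]; exact Submodule.smul_mem _ _ (hX 3)
  | 3 => rw [hSB]; exact Submodule.smul_mem _ _ ((hX 0).mul (hX 2))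

/-- In `J = ℂ[E4,E6,A,B]` (`E4 = X 0`, `E6 = X 1`, `A = X 2`, `B = X 3`)
with the derivation `S_{a,b}`, the brackets `{f,g}_n^{[a,b,c]}` (defined by bilinear
extension of the Rankin-Cohen formula on bihomogeneous elements) form a formal
deformation of `J` mapping `J_{k,p} × J_{ℓ,q}` into `J_{k+ℓ+2n, p+q}`. -/
theorem stmt10 (a b c : ℂ)
    (S : Derivation ℂ (MvPolynomial (Fin 4) ℂ) (MvPolynomial (Fin 4) ℂ))
    (hS4 : S (X 0) = (-(1/3) : ℂ) • X 1)
    (hS6 : S (X 1) = (-(1/2) : ℂ) • X 0 ^ 2)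
    (hSA : S (X 2) = a • X 3)
    (hSB : S (X 3) = b • (X 0 * X 2)) :
    ∃ μ : ℕ → MvPolynomial (Fin 4) ℂ →ₗ[ℂ]
        MvPolynomial (Fin 4) ℂ →ₗ[ℂ] MvPolynomial (Fin 4) ℂ,
      (∀ (n : ℕ) (k p ℓ q : ℤ) (f g : MvPolynomial (Fin 4) ℂ),
        f ∈ weightedHomogeneousSubmodule ℂ jacWt (k, p) →
        g ∈ weightedHomogeneousSubmodule ℂ jacWt (ℓ, q) →
        μ n f g = ∑ r ∈ range (n + 1),
          ((-1 : ℂ) ^ r * genBinom ((k : ℂ) + c * (p : ℂ) + n - 1) (n - r)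
              * genBinom ((ℓ : ℂ) + c * (q : ℂ) + n - 1) r) •
            ((S.toLinearMap ^ r) f * (S.toLinearMap ^ (n - r)) g)) ∧
      (∀ f g, μ 0 f g = f * g) ∧
      (∀ (n : ℕ) (f g h : MvPolynomial (Fin 4) ℂ),
        ∑ r ∈ range (n + 1), μ (n - r) (μ r f g) h
          = ∑ r ∈ range (n + 1), μ (n - r) f (μ r g h)) ∧
      (∀ (n : ℕ) (k p ℓ q : ℤ) (f g : MvPolynomial (Fin 4) ℂ),
        f ∈ weightedHomogeneousSubmodule ℂ jacWt (k, p) →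
        g ∈ weightedHomogeneousSubmodule ℂ jacWt (ℓ, q) →
        μ n f g ∈ weightedHomogeneousSubmodule ℂ jacWt (k + ℓ + 2 * n, p + q)) := by
  let := weightedGradedAlgebra ℂ jacWt
  exact stmt10_general (weightedHomogeneousSubmodule ℂ jacWt) c S fun i f hf =>
    derivation_mem_weightedHomogeneousSubmodule
      (derivation_X_mem_weightedHomogeneousSubmodule_jacWt hS4 hS6 hSA hSB) hf
end
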